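/- Assume the intensity measure density is log-normal: p(a) = (√(2πσ²)·a)^{-1}·exp(-(log a - μ)²/(2σ²)) on (0,∞), with parameters μ ∈ ℝ, σ > 0, and let J(θ) be the Jeffreys prior of the log-normal (probit) fragility model, J(θ)² = |A_{01,02}·A_{21,22} − A_{11,12}²| / (α²β⁶), where for k = 0,1,2, A_{k1,k2}(α,β) = ∫_0^∞ log^k(a/α)·Φ'(γ(a))²/[Φ(γ(a))(1-Φ(γ(a)))]·p(a) da, γ(a) = (log a - log α)/β, Φ'(x) = (2π)^{-1/2}exp(-x²/2). Fix an integer k ≥ 1, data a₁,…,a_k ∈ (0,∞) and z₁,…,z_k ∈ {0,1}, and assume the data are not perfectly separated, i.e. for Lebesgue-almost every α > 0 the vector N(α) with N_i(α) = z_i·1_{a_i<α} + (1-z_i)·1_{a_i>α} is nonzero. Then the Jeffreys posterior is proper: ∫_{(0,∞)²} ℓ_k(z|a,(α,β))·J((α,β)) dα dβ < +∞. -/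

import Mathlib

open MeasureTheory Real Filter Set

/-- The standard Gaussian cumulative distribution function. -/
noncomputable def Phi (x : ℝ) : ℝ :=
  (Real.sqrt (2 * Real.pi))⁻¹ * ∫ t in Set.Iic x, Real.exp (-t ^ 2 / 2)

/-- The standard Gaussian density `Φ'(x) = (2π)^{-1/2} exp(-x²/2)`. -/
noncomputable def Phi' (x : ℝ) : ℝ :=
  (Real.sqrt (2 * Real.pi))⁻¹ * Real.exp (-x ^ 2 / 2)

/-- The log-normal intensity measure density
`p(a) = (√(2πσ²)·a)⁻¹ exp(-(log a - μ)²/(2σ²))`. -/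
noncomputable def pLN (μ σ a : ℝ) : ℝ :=
  (Real.sqrt (2 * Real.pi * σ ^ 2) * a)⁻¹ * Real.exp (-(Real.log a - μ) ^ 2 / (2 * σ ^ 2))

/-- `A_{k1,k2}(α,β) = ∫₀^∞ log^k(a/α)·Φ'(γ(a))²/[Φ(γ(a))(1-Φ(γ(a)))]·p(a) da`
with `γ(a) = (log a - log α)/β`. -/
noncomputable def A (μ σ : ℝ) (k : ℕ) (α β : ℝ) : ℝ :=
  ∫ a in Set.Ioi (0 : ℝ),
    Real.log (a / α) ^ k *
      (Phi' ((Real.log a - Real.log α) / β) ^ 2 /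
        (Phi ((Real.log a - Real.log α) / β) *
          (1 - Phi ((Real.log a - Real.log α) / β)))) * pLN μ σ a

/-- The Jeffreys prior, `J(θ) = √(|A₀₁,₀₂·A₂₁,₂₂ − A₁₁,₁₂²| / (α²β⁶))`. -/
noncomputable def Jeff (μ σ α β : ℝ) : ℝ :=
  Real.sqrt (|A μ σ 0 α β * A μ σ 2 α β - A μ σ 1 α β ^ 2| / (α ^ 2 * β ^ 6))

/-- The likelihood of the log-normal (probit) fragility model. -/
noncomputable def lik (k : ℕ) (a : Fin k → ℝ) (z : Fin k → ℕ) (α β : ℝ) : ℝ :=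
  ∏ i, Phi (Real.log (a i / α) / β) ^ (z i) *
    (1 - Phi (Real.log (a i / α) / β)) ^ (1 - z i)

/-!
The Jeffreys prior is the square root of a Gram determinant `m₀ m₂ - m₁²` of moments in `log a`,
and such a determinant does not depend on the centre of the moments. About `log α` the Fisher weight
has width of order `β`, which makes the determinant `O(β⁴)`; about `μ` the normal density of `log a`
keeps it bounded. Hence `J(α, β) = O(min(β⁻¹, β⁻³) / α)`.

Non-separation provides `a j ≤ a i` with `z j = 1` and `z i = 0`, and monotonicity of `Φ` bounds the
likelihood by `Φ (1 - Φ)` at `log (a i / α) / β`, which decays like a Gaussian in `log α` of width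
`β`. Integrating against `dα / α` gains a factor `β`, and `min(1, β⁻²)` is integrable on `(0, ∞)`.
-/

open ProbabilityTheory
open scoped ENNReal

section LogSubstitution

theorem integral_Ioi_zero_eq_integral_exp_smul {E : Type*} [NormedAddCommGroup E]
    [NormedSpace ℝ E] (f : ℝ → E) :
    ∫ a in Ioi 0, f a = ∫ u, Real.exp u • f (Real.exp u) := by
  simpa [abs_of_pos (Real.exp_pos _), Real.range_exp] using
    integral_image_eq_integral_abs_deriv_smul MeasurableSet.univ
      (fun u _ => (Real.hasDerivAt_exp u).hasDerivWithinAt) Real.exp_injective.injOn f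

theorem lintegral_Ioi_zero_eq_lintegral_exp_mul (f : ℝ → ℝ≥0∞) :
    ∫⁻ a in Ioi 0, f a = ∫⁻ u, ENNReal.ofReal (Real.exp u) * f (Real.exp u) := by
  simpa [abs_of_pos (Real.exp_pos _), Real.range_exp] using
    lintegral_image_eq_lintegral_abs_deriv_mul MeasurableSet.univ
      (fun u _ => (Real.hasDerivAt_exp u).hasDerivWithinAt) Real.exp_injective.injOn f

end LogSubstitution

section StandardGaussian

theorem Phi'_eq_gaussianPDFReal : Phi' = gaussianPDFReal 0 1 := by
  ext x
  simp [Phi', gaussianPDFReal_def]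

theorem Phi_eq_measureReal_Iic (x : ℝ) : Phi x = (gaussianReal 0 1).real (Iic x) := by
  have hnonneg : 0 ≤ ∫ t in Iic x, gaussianPDFReal 0 1 t :=
    integral_nonneg (gaussianPDFReal_nonneg 0 1)
  rw [measureReal_def, gaussianReal_apply_eq_integral 0 one_ne_zero, ENNReal.toReal_ofReal hnonneg,
    ← Phi'_eq_gaussianPDFReal]
  exact (integral_const_mul _ _).symm

theorem one_sub_Phi_eq_measureReal_Ioi (x : ℝ) :
    1 - Phi x = (gaussianReal 0 1).real (Ioi x) := by
  rw [Phi_eq_measureReal_Iic, ← probReal_compl_eq_one_sub measurableSet_Iic, compl_Iic]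

theorem Phi_monotone : Monotone Phi := fun x y hxy => by
  simpa only [Phi_eq_measureReal_Iic] using measureReal_mono (Iic_subset_Iic.2 hxy)

theorem Phi_mem_Icc (x : ℝ) : Phi x ∈ Icc 0 1 := by
  rw [Phi_eq_measureReal_Iic]
  exact ⟨measureReal_nonneg, measureReal_le_one⟩

theorem Phi_neg (x : ℝ) : Phi (-x) = 1 - Phi x := by
  have hsymm : (gaussianReal 0 1).map (fun t => -t) = gaussianReal 0 1 := by
    simpa using gaussianReal_map_neg (μ := 0) (v := 1)
  have := nullSingletonClass_gaussianReal (μ := 0) (v := 1) one_ne_zero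
  rw [one_sub_Phi_eq_measureReal_Ioi, Phi_eq_measureReal_Iic, measureReal_congr Ioi_ae_eq_Ici]
  conv_lhs => rw [← hsymm]
  rw [map_measureReal_apply measurable_neg measurableSet_Iic]
  simp

theorem one_half_le_Phi {x : ℝ} (hx : 0 ≤ x) : 1 / 2 ≤ Phi x := by
  have hzero : Phi 0 = 1 - Phi 0 := by simpa using Phi_neg 0
  linarith [Phi_monotone hx]

theorem hasSubgaussianMGF_id_gaussianReal (v : NNReal) :
    HasSubgaussianMGF id v (gaussianReal 0 v) where
  integrable_exp_mul := integrable_exp_mul_gaussianReal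
  mgf_le t := by simp [mgf_id_gaussianReal]

theorem one_sub_Phi_le_exp {x : ℝ} (hx : 0 ≤ x) : 1 - Phi x ≤ Real.exp (-x ^ 2 / 2) := by
  rw [one_sub_Phi_eq_measureReal_Ioi]
  calc (gaussianReal 0 1).real (Ioi x) ≤ (gaussianReal 0 1).real (Ici x) :=
        measureReal_mono Ioi_subset_Ici_self
    _ ≤ Real.exp (-x ^ 2 / 2) := by
        simpa using! (hasSubgaussianMGF_id_gaussianReal 1).measure_ge_le hx

theorem Phi'_add_one_le_one_sub_Phi {x : ℝ} (hx : 0 ≤ x) : Phi' (x + 1) ≤ 1 - Phi x := by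
  have hint : Integrable Phi' := Phi'_eq_gaussianPDFReal ▸ integrable_gaussianPDFReal 0 1
  have hnonneg : 0 ≤ Phi' := fun t => by unfold Phi'; positivity
  calc Phi' (x + 1) = ∫ _ in Ioc x (x + 1), Phi' (x + 1) := by simp
    _ ≤ ∫ t in Ioc x (x + 1), Phi' t := by
        refine setIntegral_mono_on (integrableOn_const (by simp)) hint.integrableOn
          measurableSet_Ioc fun t ht => ?_
        have : 0 ≤ t := hx.trans ht.1.le
        have : t ≤ x + 1 := ht.2
        unfold Phi'
        gcongr
    _ ≤ ∫ t in Ioi x, Phi' t :=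
        setIntegral_mono_set hint.integrableOn (ae_of_all _ hnonneg)
          Ioc_subset_Ioi_self.eventuallyLE
    _ = 1 - Phi x := by
        rw [one_sub_Phi_eq_measureReal_Ioi, measureReal_def,
          gaussianReal_apply_eq_integral 0 one_ne_zero, ← Phi'_eq_gaussianPDFReal,
          ENNReal.toReal_ofReal (integral_nonneg hnonneg)]

theorem Phi_mul_one_sub_Phi_abs (x : ℝ) : Phi |x| * (1 - Phi |x|) = Phi x * (1 - Phi x) := by
  rcases abs_choice x with h | h
  · rw [h]
  · rw [h, Phi_neg]
    ring

theorem Phi_mul_one_sub_Phi_le_exp (x : ℝ) : Phi x * (1 - Phi x) ≤ Real.exp (-x ^ 2 / 2) := by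
  rw [← Phi_mul_one_sub_Phi_abs, ← sq_abs]
  calc Phi |x| * (1 - Phi |x|) ≤ 1 - Phi |x| :=
        mul_le_of_le_one_left (sub_nonneg.2 (Phi_mem_Icc _).2) (Phi_mem_Icc _).2
    _ ≤ Real.exp (-|x| ^ 2 / 2) := one_sub_Phi_le_exp (abs_nonneg x)

theorem half_Phi'_le_Phi_mul_one_sub_Phi (x : ℝ) :
    1 / 2 * Phi' (|x| + 1) ≤ Phi x * (1 - Phi x) := by
  rw [← Phi_mul_one_sub_Phi_abs]
  exact mul_le_mul (one_half_le_Phi (abs_nonneg x)) (Phi'_add_one_le_one_sub_Phi (abs_nonneg x))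
    (by unfold Phi'; positivity) (Phi_mem_Icc _).1

theorem Phi_mul_one_sub_Phi_pos (x : ℝ) : 0 < Phi x * (1 - Phi x) :=
  (by unfold Phi'; positivity : 0 < 1 / 2 * Phi' (|x| + 1)).trans_le
    (half_Phi'_le_Phi_mul_one_sub_Phi x)

end StandardGaussian

section ProbitWeight

/-- The Fisher information weight `Φ'² / (Φ (1 - Φ))` of the probit model. -/
noncomputable def probitWeight (x : ℝ) : ℝ := Phi' x ^ 2 / (Phi x * (1 - Phi x))

theorem probitWeight_nonneg (x : ℝ) : 0 ≤ probitWeight x :=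
  div_nonneg (sq_nonneg _) (Phi_mul_one_sub_Phi_pos x).le

theorem measurable_probitWeight : Measurable probitWeight := by
  have hPhi : Measurable Phi := Phi_monotone.measurable
  have hPhi' : Measurable Phi' := Phi'_eq_gaussianPDFReal ▸ measurable_gaussianPDFReal 0 1
  unfold probitWeight
  fun_prop

theorem exists_probitWeight_le_mul_exp :
    ∃ K : ℝ, 0 ≤ K ∧ ∀ x, probitWeight x ≤ K * Real.exp (-(x / 2) ^ 2) := by
  set c := (√(2 * π))⁻¹ with hc
  refine ⟨2 * c * Real.exp (3 / 2), by positivity, fun x => ?_⟩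
  -- `x² - x² / 4 - (|x| + 1)² / 2 + 3 / 2 = (|x| / 2 - 1)²`
  have hexponent : -x ^ 2 ≤ 3 / 2 + -(x / 2) ^ 2 + -(|x| + 1) ^ 2 / 2 := by
    linarith [sq_nonneg (|x| / 2 - 1), sq_abs x]
  rw [probitWeight, div_le_iff₀ (Phi_mul_one_sub_Phi_pos x)]
  calc Phi' x ^ 2 = c ^ 2 * Real.exp (-x ^ 2) := by
        rw [Phi', mul_pow, ← Real.exp_nat_mul, Nat.cast_ofNat, mul_div_cancel₀ _ two_ne_zero]
    _ ≤ c ^ 2 * Real.exp (3 / 2 + -(x / 2) ^ 2 + -(|x| + 1) ^ 2 / 2) := by gcongr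
    _ = 2 * c * Real.exp (3 / 2) * Real.exp (-(x / 2) ^ 2) * (1 / 2 * Phi' (|x| + 1)) := by
        rw [Phi', ← hc, Real.exp_add, Real.exp_add]
        ring
    _ ≤ 2 * c * Real.exp (3 / 2) * Real.exp (-(x / 2) ^ 2) * (Phi x * (1 - Phi x)) := by
        exact mul_le_mul_of_nonneg_left (half_Phi'_le_Phi_mul_one_sub_Phi x) (by positivity)

end ProbitWeight

section MomentDeterminant

/-- The `k`-th moment about `c` of the (possibly signed) density `w`. -/
noncomputable def weightedMoment (w : ℝ → ℝ) (c : ℝ) (k : ℕ) : ℝ :=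
  ∫ u, (u - c) ^ k * w u

/-- The Gram determinant `m₀ m₂ - m₁²` of the moments of `w` about `c`. For the weight of the probit
Fisher information, it is the numerator of the squared Jeffreys prior. -/
noncomputable def momentDet (w : ℝ → ℝ) (c : ℝ) : ℝ :=
  weightedMoment w c 0 * weightedMoment w c 2 - weightedMoment w c 1 ^ 2

/-- The `k`-th absolute moment of `exp (-t²)`. -/
noncomputable def gaussianAbsMoment (k : ℕ) : ℝ :=
  ∫ t : ℝ, |t| ^ k * Real.exp (-t ^ 2)

theorem momentDet_eq_momentDet {w : ℝ → ℝ} {c : ℝ}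
    (hw : ∀ k ≤ 2, Integrable fun u => (u - c) ^ k * w u) (d : ℝ) :
    momentDet w d = momentDet w c := by
  have hw0 := hw 0 zero_le_two
  have hw1 := hw 1 one_le_two
  have hw2 := hw 2 le_rfl
  have hzero : weightedMoment w d 0 = weightedMoment w c 0 := by
    simp only [weightedMoment, pow_zero]
  have hone : weightedMoment w d 1 = weightedMoment w c 1 + (c - d) * weightedMoment w c 0 := by
    simp only [weightedMoment]
    rw [← integral_const_mul, ← integral_add hw1 (hw0.const_mul _)]
    congr with u
    ring
  have htwo : weightedMoment w d 2 = weightedMoment w c 2 + 2 * (c - d) * weightedMoment w c 1 +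
      (c - d) ^ 2 * weightedMoment w c 0 := by
    have hadd : Integrable fun u => (u - c) ^ 2 * w u + 2 * (c - d) * ((u - c) ^ 1 * w u) :=
      hw2.add (hw1.const_mul _)
    simp only [weightedMoment]
    rw [← integral_const_mul, ← integral_const_mul, ← integral_add hw2 (hw1.const_mul _),
      ← integral_add hadd (hw0.const_mul _)]
    congr with u
    ring
  rw [momentDet, momentDet, hzero, hone, htwo]
  ring

theorem integrable_abs_pow_mul_exp_neg_sq (k : ℕ) :
    Integrable fun t : ℝ => |t| ^ k * Real.exp (-t ^ 2) := by
  have hk : (-1 : ℝ) < k := neg_one_lt_zero.trans_le k.cast_nonneg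
  simpa using (integrable_rpow_mul_exp_neg_mul_sq one_pos hk).norm

section GaussianBound

variable {w : ℝ → ℝ} {c s C : ℝ}

theorem norm_pow_mul_le_of_abs_le_exp (hs : 0 < s)
    (hw : ∀ u, |w u| ≤ C * Real.exp (-((u - c) / s) ^ 2)) (k : ℕ) (u : ℝ) :
    ‖(u - c) ^ k * w u‖ ≤
      C * s ^ k * (|(u - c) / s| ^ k * Real.exp (-((u - c) / s) ^ 2)) := by
  calc ‖(u - c) ^ k * w u‖ = |u - c| ^ k * |w u| := by simp
    _ ≤ |u - c| ^ k * (C * Real.exp (-((u - c) / s) ^ 2)) := by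
        gcongr
        exact hw u
    _ = C * s ^ k * (|(u - c) / s| ^ k * Real.exp (-((u - c) / s) ^ 2)) := by
        rw [abs_div, abs_of_pos hs, div_pow |u - c|]
        field_simp

theorem integrable_abs_sub_div_pow_mul_exp_neg_sq (hs : s ≠ 0) (c : ℝ) (k : ℕ) :
    Integrable fun u => |(u - c) / s| ^ k * Real.exp (-((u - c) / s) ^ 2) :=
  ((integrable_abs_pow_mul_exp_neg_sq k).comp_div hs).comp_sub_right c

theorem integral_abs_sub_div_pow_mul_exp_neg_sq (hs : 0 < s) (c : ℝ) (k : ℕ) :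
    ∫ u, |(u - c) / s| ^ k * Real.exp (-((u - c) / s) ^ 2) = s * gaussianAbsMoment k := by
  rw [integral_sub_right_eq_self (fun u => |u / s| ^ k * Real.exp (-(u / s) ^ 2)) c,
    Measure.integral_comp_div (fun t => |t| ^ k * Real.exp (-t ^ 2)), abs_of_pos hs, smul_eq_mul,
    gaussianAbsMoment]

theorem integrable_pow_mul_of_abs_le_exp (hs : 0 < s) (hwm : AEStronglyMeasurable w)
    (hw : ∀ u, |w u| ≤ C * Real.exp (-((u - c) / s) ^ 2)) (k : ℕ) :
    Integrable fun u => (u - c) ^ k * w u :=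
  ((integrable_abs_sub_div_pow_mul_exp_neg_sq hs.ne' c k).const_mul _).mono'
    ((Continuous.aestronglyMeasurable (by fun_prop)).mul hwm)
    (ae_of_all _ (norm_pow_mul_le_of_abs_le_exp hs hw k))

theorem abs_weightedMoment_le (hs : 0 < s)
    (hw : ∀ u, |w u| ≤ C * Real.exp (-((u - c) / s) ^ 2)) (k : ℕ) :
    |weightedMoment w c k| ≤ C * s ^ (k + 1) * gaussianAbsMoment k := by
  calc |weightedMoment w c k|
      ≤ ∫ u, C * s ^ k * (|(u - c) / s| ^ k * Real.exp (-((u - c) / s) ^ 2)) :=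
        norm_integral_le_of_norm_le
          ((integrable_abs_sub_div_pow_mul_exp_neg_sq hs.ne' c k).const_mul _)
          (ae_of_all _ (norm_pow_mul_le_of_abs_le_exp hs hw k))
    _ = C * s ^ (k + 1) * gaussianAbsMoment k := by
        rw [integral_const_mul, integral_abs_sub_div_pow_mul_exp_neg_sq hs]
        ring

theorem abs_momentDet_le (hs : 0 < s)
    (hw : ∀ u, |w u| ≤ C * Real.exp (-((u - c) / s) ^ 2)) :
    |momentDet w c| ≤
      C ^ 2 * (gaussianAbsMoment 0 * gaussianAbsMoment 2 + gaussianAbsMoment 1 ^ 2) *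
        (s ^ 2) ^ 2 := by
  have hmoment := abs_weightedMoment_le hs hw
  calc |momentDet w c|
      ≤ |weightedMoment w c 0| * |weightedMoment w c 2| + |weightedMoment w c 1| ^ 2 := by
        rw [← abs_mul, ← abs_pow]
        exact abs_sub _ _
    _ ≤ C * s ^ (0 + 1) * gaussianAbsMoment 0 * (C * s ^ (2 + 1) * gaussianAbsMoment 2) +
          (C * s ^ (1 + 1) * gaussianAbsMoment 1) ^ 2 :=
        add_le_add
          (mul_le_mul (hmoment 0) (hmoment 2) (abs_nonneg _) ((abs_nonneg _).trans (hmoment 0)))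
          (pow_le_pow_left₀ (abs_nonneg _) (hmoment 1) 2)
    _ = C ^ 2 * (gaussianAbsMoment 0 * gaussianAbsMoment 2 + gaussianAbsMoment 1 ^ 2) *
          (s ^ 2) ^ 2 := by ring

end GaussianBound

end MomentDeterminant

section JeffreysPrior

/-- The density against `du`, `u = log a`, of the Fisher information at `α = exp l`: the probit
weight at `(u - l) / β` times the normal density of `log a`. -/
noncomputable def logFisherDensity (μ σ l β u : ℝ) : ℝ :=
  probitWeight ((u - l) / β) * gaussianPDFReal μ (σ ^ 2).toNNReal u

theorem exp_mul_pLN_exp (μ σ u : ℝ) :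
    Real.exp u * pLN μ σ (Real.exp u) = gaussianPDFReal μ (σ ^ 2).toNNReal u := by
  rw [pLN, Real.log_exp, gaussianPDFReal_def, mul_inv, Real.coe_toNNReal _ (sq_nonneg σ)]
  field_simp

theorem A_eq_weightedMoment (μ σ : ℝ) (k : ℕ) {α : ℝ} (hα : 0 < α) (β : ℝ) :
    A μ σ k α β = weightedMoment (logFisherDensity μ σ (Real.log α) β) (Real.log α) k := by
  rw [A, integral_Ioi_zero_eq_integral_exp_smul, weightedMoment]
  congr with u
  rw [Real.log_div (Real.exp_pos u).ne' hα.ne', Real.log_exp, logFisherDensity, probitWeight,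
    ← exp_mul_pLN_exp, smul_eq_mul]
  ring

theorem measurable_logFisherDensity (μ σ l β : ℝ) : Measurable (logFisherDensity μ σ l β) :=
  (measurable_probitWeight.comp (by fun_prop)).mul (measurable_gaussianPDFReal _ _)

theorem abs_logFisherDensity (μ σ l β u : ℝ) :
    |logFisherDensity μ σ l β u| = logFisherDensity μ σ l β u :=
  abs_of_nonneg (mul_nonneg (probitWeight_nonneg _) (gaussianPDFReal_nonneg _ _ _))

theorem exists_abs_logFisherDensity_le (μ σ : ℝ) : ∃ C, ∀ l β u,
    |logFisherDensity μ σ l β u| ≤ C * Real.exp (-((u - l) / (2 * β)) ^ 2) ∧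
    |logFisherDensity μ σ l β u| ≤ C * Real.exp (-((u - μ) / (√2 * σ)) ^ 2) := by
  obtain ⟨K, hK, hweight⟩ := exists_probitWeight_le_mul_exp
  set Q := (√(2 * π * σ ^ 2))⁻¹ with hQ
  refine ⟨K * Q, fun l β u => ?_⟩
  have hpdf : gaussianPDFReal μ (σ ^ 2).toNNReal u =
      Q * Real.exp (-((u - μ) / (√2 * σ)) ^ 2) := by
    simp only [gaussianPDFReal_def, Real.coe_toNNReal _ (sq_nonneg σ), div_pow, mul_pow,
      Real.sq_sqrt zero_le_two, neg_div, hQ]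
  have hexp_le_one (x : ℝ) : Real.exp (-x ^ 2) ≤ 1 :=
    Real.exp_le_one_iff.2 (neg_nonpos.2 (sq_nonneg x))
  rw [abs_logFisherDensity, logFisherDensity, hpdf]
  constructor
  · calc _ ≤ K * Real.exp (-((u - l) / β / 2) ^ 2) * (Q * 1) := by
          gcongr
          exacts [hweight _, hexp_le_one _]
      _ = K * Q * Real.exp (-((u - l) / (2 * β)) ^ 2) := by
          rw [div_div, mul_comm β 2]
          ring
  · calc _ ≤ K * 1 * (Q * Real.exp (-((u - μ) / (√2 * σ)) ^ 2)) := by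
          gcongr
          exact (hweight _).trans (mul_le_mul_of_nonneg_left (hexp_le_one _) hK)
      _ = K * Q * Real.exp (-((u - μ) / (√2 * σ)) ^ 2) := by ring

theorem exists_abs_momentDet_logFisherDensity_le (μ : ℝ) {σ : ℝ} (hσ : 0 < σ) :
    ∃ D, 0 ≤ D ∧ ∀ l β, 0 < β →
      |momentDet (logFisherDensity μ σ l β) l| ≤ D * min (4 * β ^ 2) (2 * σ ^ 2) ^ 2 := by
  obtain ⟨C, hC⟩ := exists_abs_logFisherDensity_le μ σ
  have hmoment_nonneg (k : ℕ) : 0 ≤ gaussianAbsMoment k :=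
    integral_nonneg fun t => by positivity
  have h0 := hmoment_nonneg 0
  have h2 := hmoment_nonneg 2
  refine ⟨C ^ 2 * (gaussianAbsMoment 0 * gaussianAbsMoment 2 + gaussianAbsMoment 1 ^ 2),
    by positivity, fun l β hβ => ?_⟩
  have hlocal := abs_momentDet_le (mul_pos two_pos hβ) fun u => (hC l β u).1
  have hwidth : 0 < √2 * σ := by positivity
  have hglobal := abs_momentDet_le hwidth fun u => (hC l β u).2
  have hmoment_integrable := integrable_pow_mul_of_abs_le_exp hwidth
    (measurable_logFisherDensity μ σ l β).aestronglyMeasurable fun u => (hC l β u).2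
  rw [← momentDet_eq_momentDet (fun k _ => hmoment_integrable k) l] at hglobal
  rw [mul_pow, show (2 : ℝ) ^ 2 = 4 by norm_num] at hlocal
  rw [mul_pow, Real.sq_sqrt zero_le_two] at hglobal
  rcases min_choice (4 * β ^ 2) (2 * σ ^ 2) with hmin | hmin
  · rwa [hmin]
  · rwa [hmin]

/-- The `β`-profile of the bound on the Jeffreys prior: of order `1 / β` near zero and `1 / β ^ 3`
near infinity. -/
noncomputable def jeffreysProfile (σ β : ℝ) : ℝ := min (4 * β ^ 2) (2 * σ ^ 2) / β ^ 3

theorem measurable_jeffreysProfile (σ : ℝ) : Measurable (jeffreysProfile σ) := by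
  unfold jeffreysProfile
  fun_prop

theorem jeffreysProfile_nonneg (σ : ℝ) {β : ℝ} (hβ : 0 < β) : 0 ≤ jeffreysProfile σ β := by
  unfold jeffreysProfile
  positivity

theorem Jeff_eq_sqrt_momentDet (μ σ : ℝ) {α β : ℝ} (hα : 0 < α) :
    Jeff μ σ α β =
      √(|momentDet (logFisherDensity μ σ (Real.log α) β) (Real.log α)| / (α ^ 2 * β ^ 6)) := by
  simp only [Jeff, momentDet, A_eq_weightedMoment μ σ _ hα β]

theorem exists_Jeff_le (μ : ℝ) {σ : ℝ} (hσ : 0 < σ) : ∃ C, 0 ≤ C ∧ ∀ α β, 0 < α → 0 < β →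
    Jeff μ σ α β ≤ C * jeffreysProfile σ β * α⁻¹ := by
  obtain ⟨D, hD, hdet⟩ := exists_abs_momentDet_logFisherDensity_le μ hσ
  refine ⟨√D, Real.sqrt_nonneg D, fun α β hα hβ => ?_⟩
  have hprofile := jeffreysProfile_nonneg σ hβ
  rw [Jeff_eq_sqrt_momentDet μ σ hα]
  refine Real.sqrt_le_iff.2 ⟨by positivity, ?_⟩
  calc _ ≤ D * min (4 * β ^ 2) (2 * σ ^ 2) ^ 2 / (α ^ 2 * β ^ 6) := by
        gcongr
        exact hdet _ β hβ
    _ = (√D * jeffreysProfile σ β * α⁻¹) ^ 2 := by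
        rw [jeffreysProfile, mul_pow, mul_pow, Real.sq_sqrt hD]
        field_simp

theorem lintegral_mul_jeffreysProfile_lt_top (σ : ℝ) :
    ∫⁻ β in Ioi 0, ENNReal.ofReal (β * jeffreysProfile σ β) < ⊤ := by
  have hmeas : Measurable fun β => β * jeffreysProfile σ β :=
    measurable_id.mul (measurable_jeffreysProfile σ)
  have hnear : IntegrableOn (fun β => β * jeffreysProfile σ β) (Ioc 0 1) := by
    refine Measure.integrableOn_of_bounded (M := 4) (by simp) hmeas.aestronglyMeasurable
      (ae_restrict_of_forall_mem measurableSet_Ioc fun β hβ => ?_)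
    have hβ : 0 < β := hβ.1
    rw [Real.norm_of_nonneg (mul_nonneg hβ.le (jeffreysProfile_nonneg σ hβ))]
    calc β * jeffreysProfile σ β ≤ β * (4 * β ^ 2 / β ^ 3) := by
          unfold jeffreysProfile
          gcongr
          exact min_le_left _ _
      _ = 4 := by field_simp
  have hfar : IntegrableOn (fun β => β * jeffreysProfile σ β) (Ioi 1) := by
    refine ((integrableOn_Ioi_rpow_of_lt (a := -2) (by norm_num) one_pos).const_mul
      (2 * σ ^ 2)).mono' hmeas.aestronglyMeasurable
      (ae_restrict_of_forall_mem measurableSet_Ioi fun β hβ => ?_)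
    have hβ : 0 < β := one_pos.trans hβ
    rw [Real.norm_of_nonneg (mul_nonneg hβ.le (jeffreysProfile_nonneg σ hβ))]
    calc β * jeffreysProfile σ β ≤ β * (2 * σ ^ 2 / β ^ 3) := by
          unfold jeffreysProfile
          gcongr
          exact min_le_right _ _
      _ = 2 * σ ^ 2 * β ^ (-2 : ℝ) := by
          rw [Real.rpow_neg hβ.le, Real.rpow_two]
          field_simp
  have hunion := hnear.union hfar
  rw [Ioc_union_Ioi_eq_Ioi zero_le_one] at hunion
  exact hunion.lintegral_lt_top

end JeffreysPrior

section Likelihood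

theorem prod_pow_mul_one_sub_pow_le {ι : Type*} [Fintype ι] {p : ι → ℝ}
    (hp : ∀ i, p i ∈ Icc 0 1) {z : ι → ℕ} {i j : ι} (hi : z i = 0) (hj : z j = 1) :
    ∏ n, p n ^ z n * (1 - p n) ^ (1 - z n) ≤ p j * (1 - p i) := by
  classical
  have hij : i ≠ j := fun h => zero_ne_one (hi.symm.trans (h ▸ hj))
  have hq (n : ι) : 1 - p n ∈ Icc 0 1 := Icc.mem_iff_one_sub_mem.1 (hp n)
  have hfactor_nonneg (n : ι) : 0 ≤ p n ^ z n * (1 - p n) ^ (1 - z n) :=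
    mul_nonneg (pow_nonneg (hp n).1 _) (pow_nonneg (hq n).1 _)
  have hfactor_le_one (n : ι) : p n ^ z n * (1 - p n) ^ (1 - z n) ≤ 1 :=
    mul_le_one₀ (pow_le_one₀ (hp n).1 (hp n).2) (pow_nonneg (hq n).1 _)
      (pow_le_one₀ (hq n).1 (hq n).2)
  calc ∏ n, p n ^ z n * (1 - p n) ^ (1 - z n)
      ≤ ∏ n ∈ {i, j}, p n ^ z n * (1 - p n) ^ (1 - z n) :=
        Finset.prod_le_prod_of_subset_of_le_one (Finset.subset_univ _)
          (fun n _ => hfactor_nonneg n) (fun n _ _ => hfactor_le_one n)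
    _ = p j * (1 - p i) := by
        rw [Finset.prod_pair hij, hi, hj]
        ring

theorem lik_le_exp {k : ℕ} {a : Fin k → ℝ} {z : Fin k → ℕ} {i j : Fin k} (hi : z i = 0)
    (hj : z j = 1) (haj : 0 < a j) (hle : a j ≤ a i) {α β : ℝ} (hα : 0 < α) (hβ : 0 < β) :
    lik k a z α β ≤ Real.exp (-((Real.log (a i) - Real.log α) / β) ^ 2 / 2) := by
  have hmono : Phi (Real.log (a j / α) / β) ≤ Phi (Real.log (a i / α) / β) :=
    Phi_monotone (by gcongr)
  calc lik k a z α β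
      ≤ Phi (Real.log (a j / α) / β) * (1 - Phi (Real.log (a i / α) / β)) :=
        prod_pow_mul_one_sub_pow_le (fun n => Phi_mem_Icc (Real.log (a n / α) / β)) hi hj
    _ ≤ Phi (Real.log (a i / α) / β) * (1 - Phi (Real.log (a i / α) / β)) :=
        mul_le_mul_of_nonneg_right hmono (sub_nonneg.2 (Phi_mem_Icc _).2)
    _ ≤ Real.exp (-(Real.log (a i / α) / β) ^ 2 / 2) := Phi_mul_one_sub_Phi_le_exp _
    _ = Real.exp (-((Real.log (a i) - Real.log α) / β) ^ 2 / 2) := by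
        rw [Real.log_div (haj.trans_le hle).ne' hα.ne']

-- Otherwise the points with `z i = 0` lie strictly below those with `z i = 1`, and the separating
-- thresholds `α` contain a nonempty open set.
theorem exists_le_of_ae_not_separated {ι : Type*} [Finite ι] {a : ι → ℝ} (ha : ∀ i, 0 < a i)
    {z : ι → ℕ} (hz : ∀ i, z i = 0 ∨ z i = 1)
    (hnosep : ∀ᵐ α ∂(volume.restrict (Ioi (0 : ℝ))),
      ∃ i, (if a i < α then z i else if α < a i then 1 - z i else 0) ≠ 0) :
    ∃ i j, z i = 0 ∧ z j = 1 ∧ a j ≤ a i := by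
  have := Fintype.ofFinite ι
  by_contra! hsep
  let U : Set ℝ := Ioi 0 ∩ ((⋂ i ∈ {i | z i = 0}, Ioi (a i)) ∩ ⋂ j ∈ {j | z j = 1}, Iio (a j))
  have hopen : IsOpen U :=
    isOpen_Ioi.inter (((toFinite _).isOpen_biInter fun _ _ => isOpen_Ioi).inter
      ((toFinite _).isOpen_biInter fun _ _ => isOpen_Iio))
  have hne : U.Nonempty := by
    obtain ⟨α, hlow, hhigh⟩ := Order.exists_between_finsets
      (insert 0 (({i | z i = 0} : Finset ι).image a))
      (({j | z j = 1} : Finset ι).image a) (by grind)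
    simp only [Finset.mem_insert, Finset.forall_mem_image, Finset.mem_filter_univ,
      forall_eq_or_imp] at hlow hhigh
    exact ⟨α, hlow.1, mem_iInter₂.2 fun i hi => hlow.2 hi, mem_iInter₂.2 fun j hj => hhigh hj⟩
  rw [ae_restrict_iff' measurableSet_Ioi] at hnosep
  obtain ⟨α, ⟨hα, hlow, hhigh⟩, hnot⟩ :=
    (Measure.dense_of_ae hnosep).inter_open_nonempty U hopen hne
  simp only [mem_iInter, mem_ofPred_eq, mem_Ioi, mem_Iio] at hlow hhigh
  obtain ⟨i, hi⟩ := hnot hα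
  rcases hz i with hzero | hone
  · simp [hzero, hlow i hzero] at hi
  · simp [hone, (hhigh i hone).not_gt] at hi

end Likelihood

section Posterior

theorem lintegral_exp_neg_log_sq (c : ℝ) {β : ℝ} (hβ : 0 < β) :
    ∫⁻ α in Ioi 0, ENNReal.ofReal (Real.exp (-((c - Real.log α) / β) ^ 2 / 2) * α⁻¹) =
      ENNReal.ofReal (√(2 * π) * β) := by
  have hint : Integrable fun t : ℝ => Real.exp (-t ^ 2 / 2) :=
    (integrable_exp_neg_mul_sq one_half_pos).congr (ae_of_all _ fun t => by ring_nf)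
  have hval : ∫ t : ℝ, Real.exp (-t ^ 2 / 2) = √(2 * π) := by
    convert integral_gaussian (1 / 2) using 3 <;> ring_nf
  calc _ = ∫⁻ u, ENNReal.ofReal (Real.exp (-((c - u) / β) ^ 2 / 2)) := by
        rw [lintegral_Ioi_zero_eq_lintegral_exp_mul]
        congr with u
        rw [← ENNReal.ofReal_mul (Real.exp_pos u).le, Real.log_exp, mul_left_comm,
          mul_inv_cancel₀ (Real.exp_pos u).ne', mul_one]
    _ = ENNReal.ofReal (∫ u, Real.exp (-((c - u) / β) ^ 2 / 2)) :=
        (ofReal_integral_eq_lintegral_ofReal ((hint.comp_div hβ.ne').comp_sub_left c)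
          (ae_of_all _ fun u => (Real.exp_pos _).le)).symm
    _ = ENNReal.ofReal (√(2 * π) * β) := by
        rw [integral_sub_left_eq_self (fun u => Real.exp (-(u / β) ^ 2 / 2)) volume c,
          Measure.integral_comp_div (fun t => Real.exp (-t ^ 2 / 2)), hval, abs_of_pos hβ,
          smul_eq_mul, mul_comm]

theorem lintegral_prod_exp_neg_log_sq (c : ℝ) {g : ℝ → ℝ≥0∞} (hg : Measurable g) :
    ∫⁻ θ in Ioi (0 : ℝ) ×ˢ Ioi (0 : ℝ),
        g θ.2 * ENNReal.ofReal (Real.exp (-((c - Real.log θ.1) / θ.2) ^ 2 / 2) * θ.1⁻¹) =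
      ∫⁻ β in Ioi 0, g β * ENNReal.ofReal (√(2 * π) * β) := by
  rw [Measure.volume_eq_prod, ← Measure.prod_restrict, lintegral_prod_symm _ (by fun_prop)]
  refine setLIntegral_congr_fun measurableSet_Ioi fun β hβ => ?_
  exact (lintegral_const_mul _ (by fun_prop)).trans
    (congrArg (g β * ·) (lintegral_exp_neg_log_sq c hβ))

theorem lintegral_jeffreysProfile_mul_exp_lt_top (C c σ : ℝ) :
    ∫⁻ θ in Ioi (0 : ℝ) ×ˢ Ioi (0 : ℝ), ENNReal.ofReal (C * jeffreysProfile σ θ.2) *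
      ENNReal.ofReal (Real.exp (-((c - Real.log θ.1) / θ.2) ^ 2 / 2) * θ.1⁻¹) < ⊤ := by
  have hmeas := measurable_jeffreysProfile σ
  rw [lintegral_prod_exp_neg_log_sq c (g := fun β => ENNReal.ofReal (C * jeffreysProfile σ β))
    (by fun_prop)]
  calc _ = ∫⁻ β in Ioi 0, ENNReal.ofReal (C * √(2 * π)) *
          ENNReal.ofReal (β * jeffreysProfile σ β) := by
        refine setLIntegral_congr_fun measurableSet_Ioi fun β hβ => ?_
        have hβ : 0 < β := hβ
        rw [← ENNReal.ofReal_mul' (by positivity),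
          ← ENNReal.ofReal_mul' (mul_nonneg hβ.le (jeffreysProfile_nonneg σ hβ))]
        ring_nf
    _ < ⊤ := by
        rw [lintegral_const_mul _ (by fun_prop)]
        exact ENNReal.mul_lt_top ENNReal.ofReal_lt_top (lintegral_mul_jeffreysProfile_lt_top σ)

end Posterior

/-- If the data are not perfectly separated (for Lebesgue-a.e. `α > 0` the vector
`N(α)` with `Nᵢ(α) = zᵢ·1_{aᵢ<α} + (1-zᵢ)·1_{aᵢ>α}` is nonzero), then the Jeffreys
posterior is proper: `∫_{(0,∞)²} ℓ_k(z|a,(α,β))·J((α,β)) dα dβ < +∞`. -/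
theorem stmt16 (μ σ : ℝ) (hσ : 0 < σ) (k : ℕ) (hk : 1 ≤ k)
    (a : Fin k → ℝ) (ha : ∀ i, 0 < a i)
    (z : Fin k → ℕ) (hz : ∀ i, z i = 0 ∨ z i = 1)
    (hnosep : ∀ᵐ α ∂(volume.restrict (Set.Ioi (0 : ℝ))),
      ∃ i, (if a i < α then z i else if α < a i then 1 - z i else 0) ≠ 0) :
    ∫⁻ θ in Set.Ioi (0 : ℝ) ×ˢ Set.Ioi (0 : ℝ),
      ENNReal.ofReal (lik k a z θ.1 θ.2 * Jeff μ σ θ.1 θ.2) < ⊤ := by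
  obtain ⟨i, j, hi, hj, hle⟩ := exists_le_of_ae_not_separated ha hz hnosep
  obtain ⟨C, hC, hJeff⟩ := exists_Jeff_le μ hσ
  have hmeas := measurable_jeffreysProfile σ
  refine lt_of_le_of_lt (setLIntegral_mono (by fun_prop) fun θ hθ => ?_)
    (lintegral_jeffreysProfile_mul_exp_lt_top C (Real.log (a i)) σ)
  obtain ⟨hα, hβ⟩ : 0 < θ.1 ∧ 0 < θ.2 := hθ
  rw [← ENNReal.ofReal_mul (mul_nonneg hC (jeffreysProfile_nonneg σ hβ))]
  refine ENNReal.ofReal_le_ofReal ?_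
  calc lik k a z θ.1 θ.2 * Jeff μ σ θ.1 θ.2
      ≤ Real.exp (-((Real.log (a i) - Real.log θ.1) / θ.2) ^ 2 / 2) *
          (C * jeffreysProfile σ θ.2 * θ.1⁻¹) :=
        mul_le_mul (lik_le_exp hi hj (ha j) hle hα hβ) (hJeff _ _ hα hβ) (Real.sqrt_nonneg _)
          (Real.exp_pos _).le
    _ = C * jeffreysProfile σ θ.2 *
          (Real.exp (-((Real.log (a i) - Real.log θ.1) / θ.2) ^ 2 / 2) * θ.1⁻¹) := by ring
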